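/- For every β(0,1)-tree T, root(g(T)) = open(T) and open(g(T)) = root(T). -/

import Mathlib

/-!
The two identities are proved together with structural facts about the images, by strong
induction on the number of nodes. Everything happens on the rightmost path: whether a node is
open depends only on its rightmost child, and moderateness of a non-leaf depends only on the
difference between its label and the sum of its children's labels. All of the operations add (or
subtract) the same amount along an initial piece of the rightmost path, so they preserve these
differences strictly inside that piece, and only its end has to be inspected.

* `nuT_spec`: `open (ν_i(A, B)) = open A + open B` and `root (ν_i(A, B)) = root A + i - 1`. The
  leaf of `A` becomes a non-leaf, moderate because `i ≤ root B`, so its parent becomes open and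
  takes over the contribution of the leaf.
* `muT_spec`: `open (μ₁(S, B)) = 1` and `root (μ₁(S, B)) = root B + 1` when the rightmost child of
  the root of `S` is a leaf: no node above the first open node of `B` is open, and the first open
  node gets a leaf as its rightmost child.
* `decT_spec`: for `U = μ_i(S, T)` with `decT U = (T, S)`, one has `root U = root T + 1`, and with
  `a` the number of open nodes above the gluing node, `open U = a + open S` and `a + 1 ≤ open T`.
  Hence `i = a + 1` satisfies `1 ≤ i ≤ open T`, which is `root (g T)` by induction, so that
  `nuT_spec` applies.

For `T = ρ(T₁, …, T_k)` both sides of the first identity are `open T_k + 1`, and both sides of the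
second are `1`.
-/

/-- Labeled rooted plane trees: each node carries a natural-number label and an
ordered list of subtrees. -/
inductive BTree : Type
  | node : ℕ → List BTree → BTree
deriving Repr

namespace BTree

/-- The trivial β(0,1)-tree ε: a single node labeled 0. -/
def eps : BTree := node 0 []

/-- The label of the root of a tree. -/
def label : BTree → ℕ
  | node n _ => n

/-- The list of subtrees of the root. -/
def children : BTree → List BTree
  | node _ ts => ts

/-- The sum of the labels of the children of the root. -/
def childSum (t : BTree) : ℕ := (t.children.map label).sum

/-- Validity condition for non-root nodes of a β(0,1)-tree: leaves have label 0,
and the label of every node exceeds the sum of its children's labels by at most one. -/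
inductive ValidSub : BTree → Prop
  | mk (n : ℕ) (ts : List BTree) :
      (ts = [] → n = 0) →
      n ≤ (ts.map label).sum + 1 →
      (∀ t ∈ ts, ValidSub t) →
      ValidSub (node n ts)

/-- `t` is a β(0,1)-tree: the trivial tree is the single node labeled 0; otherwise the
root label is one more than the sum of its children's labels, and every non-root node
has label at most one more than the sum of its children's labels, leaves having label 0. -/
def IsBeta (t : BTree) : Prop :=
  (t.children = [] → t.label = 0) ∧
  (t.children ≠ [] → t.label = childSum t + 1) ∧
  ∀ c ∈ t.children, ValidSub c

mutual
/-- The rightmost path of a tree, from the root to the rightmost leaf; each node on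
the path is recorded together with its full subtree. -/
def rpath : BTree → List BTree
  | node n ts => node n ts :: rpathL ts
def rpathL : List BTree → List BTree
  | [] => []
  | [t] => rpath t
  | _ :: t :: ts => rpathL (t :: ts)
end

/-- A node is moderate if its label does not exceed the sum of its children's labels. -/
def moderate (t : BTree) : Bool := decide (t.label ≤ childSum t)

/-- A node (on the rightmost path) is open iff it is a leaf (i.e. it is the rightmost
leaf), or its rightmost child is a non-leaf moderate node. -/
def isOpenNode (t : BTree) : Bool :=
  match t.children.getLast? with
  | none => true
  | some c => !c.children.isEmpty && moderate c

/-- The statistic `root`: the label of the root. -/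
def rootStat (t : BTree) : ℕ := t.label

/-- The statistic `open`: the number of open nodes (all of which lie on the
rightmost path), with open(ε) = 0. -/
def openStat : BTree → ℕ
  | node 0 [] => 0
  | t => (rpath t).countP isOpenNode

/-- The statistic `rmod`: the number of moderate nodes on the rightmost path,
with rmod(ε) = 0. -/
def rmodStat : BTree → ℕ
  | node 0 [] => 0
  | t => (rpath t).countP moderate

mutual
/-- The number of nodes of a tree. -/
def size : BTree → ℕ
  | node _ ts => 1 + sizeL ts
def sizeL : List BTree → ℕ
  | [] => 0
  | t :: ts => size t + sizeL ts
end

mutual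
/-- The number of excessive nodes of a tree (nodes whose label exceeds the sum of the
labels of their children). -/
def excT : BTree → ℕ
  | node n ts => (if (ts.map label).sum < n then 1 else 0) + excL ts
def excL : List BTree → ℕ
  | [] => 0
  | t :: ts => excT t + excL ts
end

/-- The sum U ⊕ V of two trees: identify the two roots into a new root labeled
root(U) + root(V) − 1, its children being those of U followed by those of V. -/
def oplus (u v : BTree) : BTree := node (u.label + v.label - 1) (u.children ++ v.children)

/-- Relabel the root. -/
def setLabel (i : ℕ) (t : BTree) : BTree := node i t.children

/-- λ_i(T): join a new root, labeled i+1, by an edge to the old root, which is relabeled i. -/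
def lam (i : ℕ) (t : BTree) : BTree := node (i + 1) [setLabel i t]

/-- Iterated ⊕ of a list of trees (ε for the empty list). -/
def oplusList : List BTree → BTree
  | [] => eps
  | [t] => t
  | t :: ts => oplus t (oplusList ts)

/-- ρ(T₁,…,T_k) = λ₀(T₁) ⊕ ⋯ ⊕ λ₀(T_k). -/
def rho (Ts : List BTree) : BTree := oplusList (Ts.map (lam 0))

/-- Add one to the label of the root. -/
def incRoot (t : BTree) : BTree := node (t.label + 1) t.children

mutual
/-- Walk down the rightmost path of a tree looking for the i-th open node x, adding one
to each label on the way (through x, and through the rightmost child y of x if x is not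
a leaf); at x, append the children of S. -/
def muT (S : BTree) : ℕ → BTree → BTree
  | i, node n ts =>
    if isOpenNode (node n ts) && decide (i ≤ 1) then
      if ts.isEmpty then node (n + 1) S.children
      else node (n + 1) (ts.dropLast ++ [incRoot (ts.getLastD eps)] ++ S.children)
    else
      node (n + 1) (muL S (if isOpenNode (node n ts) then i - 1 else i) ts)
def muL (S : BTree) (i : ℕ) : List BTree → List BTree
  | [] => []
  | [t] => [muT S i t]
  | t :: ts => t :: muL S i ts
end

/-- μ_i(S,T): identify the i-th open node x on the rightmost path of T with the root of
S, keeping the label of x, and add one to each node on the rightmost path of T between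
the root and y (inclusive), where y = x if x is a leaf and otherwise y is the rightmost
child of x.  (In particular μ₁(S,ε) = S when root(S) = 1.) -/
def mu (i : ℕ) (S T : BTree) : BTree := muT S i T

mutual
/-- Walk down the rightmost path of a tree adding j to every label; at the rightmost
leaf, attach the children of T. -/
def nuT (T : BTree) (j : ℕ) : BTree → BTree
  | node n [] => node (n + j) T.children
  | node n ts => node (n + j) (nuL T j ts)
def nuL (T : BTree) (j : ℕ) : List BTree → List BTree
  | [] => []
  | [t] => [nuT T j t]
  | t :: ts => t :: nuL T j ts
end

/-- ν_i(S,T): identify the rightmost leaf x of S with the root of T, keeping the zero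
label of x, and add i − 1 to each node on the rightmost path of S between the root and
x (inclusive).  (In particular ν₁(S,ε) = S.) -/
def nu (i : ℕ) (S T : BTree) : BTree := nuT T (i - 1) S

/-- σ(T₁,…,T_k) = μ₁(ρ(T_{k−1},…,T₁,ε), T_k). -/
def sigma (Ts : List BTree) : BTree :=
  mu 1 (rho (Ts.dropLast.reverse ++ [eps])) (Ts.getLastD eps)

/-- The maximal suffix of a list of trees all of whose root labels are 0. -/
def zeroSuffix : List BTree → List BTree
  | [] => []
  | t :: ts =>
    let z := zeroSuffix ts
    if z.length = ts.length ∧ t.label = 0 then t :: z else z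

/-- Subtract one from the label of the root. -/
def decRoot (t : BTree) : BTree := node (t.label - 1) t.children

mutual
/-- Inverse of μ on β(0,1)-trees with root label > 1: walk down the rightmost path to
the parent x of the first node labeled 0 on the path (subtracting one from the labels
on the way); the maximal zero-labeled suffix of the children of x is the list of
children of S, the rest (with the label of its last element decremented) are the
children of x in T.  Returns the pair (T, S) such that the input is μ_i(S,T). -/
def decT : BTree → BTree × BTree
  | node n ts =>
    if (ts.getLastD eps).label = 0 then
      let zs := zeroSuffix ts
      let ps := ts.take (ts.length - zs.length)
      (node (n - 1) (if ps.isEmpty then [] else ps.dropLast ++ [decRoot (ps.getLastD eps)]),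
       node 1 zs)
    else
      (node (n - 1) (decL ts).1, (decL ts).2)
def decL : List BTree → List BTree × BTree
  | [] => ([], eps)
  | [t] => ([(decT t).1], (decT t).2)
  | t :: ts => (t :: (decL ts).1, (decL ts).2)
end

/-- Restore the root label of a β(0,1)-tree whose root label was forgotten:
ε for a single node, and otherwise one plus the sum of the children's labels. -/
def makeRoot : BTree → BTree
  | node _ [] => eps
  | node _ ts => node ((ts.map label).sum + 1) ts

/-- Fueled version of the map g.  A β(0,1)-tree with root label 1 is ρ(T₁,…,T_k) where
the Tⱼ are recovered from the children via `makeRoot`, and g maps it to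
σ(g(T₁),…,g(T_k)); a β(0,1)-tree U with root label > 1 is μ_i(S,T) where (T,S) = decT U
and i = open(U) + 1 − open(S) (since open(μ_i(S,T)) = i − 1 + open(S)), and g maps it
to ν_i(g(S),g(T)); finally g(ε) = ε. -/
def gF : ℕ → BTree → BTree
  | 0, t => t
  | fuel + 1, t =>
    match t with
    | node 0 _ => t
    | node 1 cs => sigma (cs.map fun c => gF fuel (makeRoot c))
    | node _ _ =>
      nu (openStat t + 1 - openStat (decT t).2) (gF fuel (decT t).2) (gF fuel (decT t).1)

/-- The map g on β(0,1)-trees: g(ε) = ε, g(ρ(T₁,…,T_k)) = σ(g(T₁),…,g(T_k)), and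
g(μ_i(S,T)) = ν_i(g(S), g(T)).  (The number of nodes suffices as fuel since all
recursive calls are on trees with strictly fewer nodes.) -/
def g (t : BTree) : BTree := gF (size t) t

/-! ### The rightmost path -/

@[simp] lemma label_node (n : ℕ) (ts : List BTree) : (node n ts).label = n := rfl
@[simp] lemma children_node (n : ℕ) (ts : List BTree) : (node n ts).children = ts := rfl
@[simp] lemma childSum_node (n : ℕ) (ts : List BTree) :
    (node n ts).childSum = (ts.map label).sum := rfl

lemma sizeL_append (l m : List BTree) : sizeL (l ++ m) = sizeL l + sizeL m := by
  induction l with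
  | nil => simp [sizeL]
  | cons a l ih => simp [sizeL, ih]; omega

lemma size_pos (t : BTree) : 0 < size t := by
  cases t; simp [size]

lemma one_lt_size {t : BTree} (h : t.children ≠ []) : 1 < size t := by
  obtain ⟨n, ts⟩ := t
  obtain ⟨a, l, rfl⟩ := List.exists_cons_of_ne_nil h
  have := size_pos a
  simp [size, sizeL]; omega

/-- Induction along the rightmost path, from the rightmost leaf up to the root. -/
lemma right_induction {P : BTree → Prop} (leaf : ∀ n, P (node n []))
    (step : ∀ n l t, P t → P (node n (l ++ [t]))) (t : BTree) : P t := by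
  induction h : size t using Nat.strong_induction_on generalizing t with
  | _ k ih =>
    obtain ⟨n, ts⟩ := t
    rcases List.eq_nil_or_concat ts with rfl | ⟨l, t, rfl⟩
    · exact leaf n
    · rw [List.concat_eq_append] at h ⊢
      refine step n l t (ih _ ?_ t rfl)
      simp [size, sizeL_append, sizeL] at h
      omega

lemma rpathL_append (l : List BTree) (t : BTree) : rpathL (l ++ [t]) = rpath t := by
  induction l with
  | nil => simp [rpathL]
  | cons a l ih => cases l <;> simp_all [rpathL]

lemma muL_append (S : BTree) (i : ℕ) (l : List BTree) (t : BTree) :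
    muL S i (l ++ [t]) = l ++ [muT S i t] := by
  induction l with
  | nil => simp [muL]
  | cons a l ih => cases l <;> simp_all [muL]

lemma nuL_append (T : BTree) (j : ℕ) (l : List BTree) (t : BTree) :
    nuL T j (l ++ [t]) = l ++ [nuT T j t] := by
  induction l with
  | nil => simp [nuL]
  | cons a l ih => cases l <;> simp_all [nuL]

lemma nuT_append (T : BTree) (j n : ℕ) (l : List BTree) (t : BTree) :
    nuT T j (node n (l ++ [t])) = node (n + j) (l ++ [nuT T j t]) := by
  rw [← nuL_append]
  cases l <;> simp [nuT]

lemma decL_append (l : List BTree) (t : BTree) :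
    decL (l ++ [t]) = (l ++ [(decT t).1], (decT t).2) := by
  induction l with
  | nil => simp [decL]
  | cons a l ih => cases l <;> simp_all [decL]

@[simp] lemma isOpenNode_leaf (n : ℕ) : isOpenNode (node n []) = true := rfl

@[simp] lemma isOpenNode_append (n : ℕ) (l : List BTree) (t : BTree) :
    isOpenNode (node n (l ++ [t])) = (!t.children.isEmpty && moderate t) := by
  simp [isOpenNode]

/-- The number of open nodes on the rightmost path, without the exceptional value at `ε`: it
equals `1` on a leaf. -/
def oc (t : BTree) : ℕ := (rpath t).countP isOpenNode

@[simp] lemma oc_leaf (n : ℕ) : oc (node n []) = 1 := by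
  simp [oc, rpath, rpathL]

@[simp] lemma oc_append (n : ℕ) (l : List BTree) (t : BTree) :
    oc (node n (l ++ [t])) =
      oc t + if (!t.children.isEmpty && moderate t) = true then 1 else 0 := by
  rw [oc, rpath, rpathL_append, List.countP_cons, isOpenNode_append, oc]

/-- Openness depends on the children only, so the root label is irrelevant. -/
lemma oc_relabel (m n : ℕ) (ts : List BTree) : oc (node m ts) = oc (node n ts) := by
  rcases List.eq_nil_or_concat ts with rfl | ⟨l, t, rfl⟩ <;> simp

lemma openStat_eq_oc {t : BTree} (h : t.children ≠ []) : openStat t = oc t := by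
  obtain ⟨n, ts⟩ := t
  cases ts with
  | nil => simp at h
  | cons a l => cases n <;> simp [openStat, oc]

/-- The rightmost leaf is labeled 0. -/
def LeafZero (t : BTree) : Prop := ∀ u ∈ rpath t, u.children = [] → u.label = 0

@[simp] lemma leafZero_leaf (n : ℕ) : LeafZero (node n []) ↔ n = 0 := by
  simp [LeafZero, rpath, rpathL]

@[simp] lemma leafZero_append (n : ℕ) (l : List BTree) (t : BTree) :
    LeafZero (node n (l ++ [t])) ↔ LeafZero t := by
  simp [LeafZero, rpath, rpathL_append]

lemma leafZero_relabel {m : ℕ} (n : ℕ) {ts : List BTree} (h : LeafZero (node m ts))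
    (hts : ts ≠ []) : LeafZero (node n ts) := by
  rcases List.eq_nil_or_concat ts with rfl | ⟨l, t, rfl⟩
  · exact absurd rfl hts
  · simpa using h

/-- The part of being a nontrivial β(0,1)-tree that is needed of the trees produced by `g`: the
conditions at the root and at the rightmost leaf. -/
structure Good (t : BTree) : Prop where
  ne : t.children ≠ []
  lab : t.label = childSum t + 1
  leaf : LeafZero t

/-! ### The effect of ν and μ on the statistics -/

/-- Gluing `B` at the rightmost leaf of `A`, with `j = i - 1`. -/
lemma nuT_spec (B : BTree) (j : ℕ) (hB : Good B) (hj : j ≤ childSum B) (A : BTree) :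
    LeafZero A →
    (nuT B j A).label = A.label + j ∧ LeafZero (nuT B j A) ∧ (nuT B j A).children ≠ [] ∧
    (A.children = [] → (nuT B j A).childSum = childSum B ∧ oc (nuT B j A) = oc B) ∧
    (A.children ≠ [] → (nuT B j A).childSum = childSum A + j ∧ oc (nuT B j A) = oc A + oc B) := by
  induction A using right_induction with
  | leaf n =>
    intro h
    obtain ⟨m, bs⟩ := B
    simp only [nuT, children_node, label_node, childSum_node]
    exact ⟨trivial, leafZero_relabel _ hB.leaf hB.ne, hB.ne,
      fun _ => ⟨trivial, oc_relabel _ _ _⟩, fun h => absurd rfl h⟩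
  | step n l t ih =>
    intro h
    rw [leafZero_append] at h
    obtain ⟨h1, h2, h3, h4, h5⟩ := ih h
    rw [nuT_append]
    refine ⟨rfl, by simpa using h2, by simp, by simp, fun _ => ⟨by simp [h1]; omega, ?_⟩⟩
    rcases eq_or_ne t.children [] with ht | ht
    · -- `t` is the rightmost leaf; after gluing it is moderate because `j ≤ childSum B`
      obtain ⟨h4, h6⟩ := h4 ht
      obtain ⟨m, ts⟩ := t
      simp only [children_node] at ht
      subst ht
      have hm : m = 0 := by simpa using h
      subst hm
      simp [moderate, h1, h3, h4, h6, hj]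
      omega
    · obtain ⟨h5, h6⟩ := h5 ht
      simp [moderate, h1, h3, h5, h6, ht]
      omega

/-- Inserting at the first open node of `B` a tree whose root has only zero-labeled children, the
last of which is a leaf. -/
lemma muT_spec (S : BTree) (s : List BTree) (hS : S.children = s ++ [eps])
    (h0 : (s.map label).sum = 0) (B : BTree) :
    LeafZero B →
    (muT S 1 B).label = B.label + 1 ∧ LeafZero (muT S 1 B) ∧ (muT S 1 B).children ≠ [] ∧
    oc (muT S 1 B) = 1 ∧
    (B.children = [] → (muT S 1 B).childSum = 0) ∧
    (B.children ≠ [] → (muT S 1 B).childSum = childSum B + 1) := by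
  induction B using right_induction with
  | leaf n =>
    intro h
    simp [muT, hS, h0, eps, childSum]
  | step n l t ih =>
    intro h
    rw [leafZero_append] at h
    obtain ⟨h1, h2, h3, h4, h5, h6⟩ := ih h
    by_cases ho : (!t.children.isEmpty && moderate t) = true
    · have hC : muT S 1 (node n (l ++ [t])) =
          node (n + 1) ((l ++ [incRoot t] ++ s) ++ [eps]) := by
        simp [muT, ho, hS]
      rw [hC]
      refine ⟨rfl, ?_, by simp, ?_, by simp, ?_⟩
      · rw [leafZero_append]; simp [eps]
      · rw [oc_append]; simp [eps]
      · simp [h0, eps, incRoot]; omega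
    · have hC : muT S 1 (node n (l ++ [t])) = node (n + 1) (l ++ [muT S 1 t]) := by
        rw [muT]; simp only [isOpenNode_append, ho, muL_append]; simp
      rw [hC]
      refine ⟨rfl, by simpa using h2, by simp, ?_, by simp, by simp [h1]; omega⟩
      have hmod : ¬ (moderate (muT S 1 t) = true) := by
        rcases eq_or_ne t.children [] with ht | ht
        · simp [moderate, h1, h5 ht]
        · simp [moderate, h1, h6 ht]
          simpa [moderate, ht] using ho
      simp [h4, hmod]

/-! ### The decomposition of a tree with root label greater than 1 -/

lemma zeroSuffix_spec (ts : List BTree) : ∃ ps, ts = ps ++ zeroSuffix ts ∧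
    (∀ t ∈ zeroSuffix ts, t.label = 0) ∧ (ps = [] ∨ ∃ q y, ps = q ++ [y] ∧ y.label ≠ 0) := by
  induction ts with
  | nil => exact ⟨[], by simp [zeroSuffix]⟩
  | cons t ts ih =>
    obtain ⟨ps, h1, h2, h3⟩ := ih
    have hlen := congrArg List.length h1
    rw [List.length_append] at hlen
    by_cases h : (zeroSuffix ts).length = ts.length ∧ t.label = 0
    · have hz : zeroSuffix (t :: ts) = t :: zeroSuffix ts := by simp [zeroSuffix, h]
      have hps : ps = [] := List.length_eq_zero_iff.1 (by omega)
      subst hps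
      refine ⟨[], ?_, ?_, Or.inl rfl⟩
      · rw [hz]; simpa using h1
      · rw [hz]; simpa using ⟨h.2, h2⟩
    · have hz : zeroSuffix (t :: ts) = zeroSuffix ts := by
        rw [zeroSuffix]; exact if_neg h
      refine ⟨t :: ps, ?_, ?_, Or.inr ?_⟩
      · rw [hz, List.cons_append, ← h1]
      · rwa [hz]
      · rcases h3 with rfl | ⟨q, y, rfl, hy⟩
        · exact ⟨[], t, rfl, fun h0 => h ⟨by simp at hlen; omega, h0⟩⟩
        · exact ⟨t :: q, y, rfl, hy⟩

lemma zeroSuffix_ne {l : List BTree} {t : BTree} (ht : t.label = 0) :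
    zeroSuffix (l ++ [t]) ≠ [] := by
  obtain ⟨ps, h1, _, h3⟩ := zeroSuffix_spec (l ++ [t])
  intro h
  rw [h, List.append_nil] at h1
  rcases h3 with rfl | ⟨q, y, rfl, hy⟩
  · simp at h1
  · obtain ⟨_, h⟩ := List.append_inj' h1 rfl
    simp at h
    exact hy (h ▸ ht)

lemma ValidSub.inv {n : ℕ} {ts : List BTree} (h : ValidSub (node n ts)) :
    (ts = [] → n = 0) ∧ n ≤ (ts.map label).sum + 1 ∧ ∀ t ∈ ts, ValidSub t := by
  cases h with
  | mk _ _ a b c => exact ⟨a, b, c⟩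

lemma sum_label_eq_zero {l : List BTree} (h : ∀ t ∈ l, t.label = 0) : (l.map label).sum = 0 := by
  simpa [List.sum_eq_zero_iff] using h

/-- The number of open nodes only depends on the last children, as long as there are some. -/
lemma oc_append_right (m n : ℕ) (ps zs : List BTree) (h : zs ≠ []) :
    oc (node m (ps ++ zs)) = oc (node n zs) := by
  rcases List.eq_nil_or_concat zs with rfl | ⟨l, t, rfl⟩
  · exact absurd rfl h
  · rw [List.concat_eq_append, ← List.append_assoc, oc_append, oc_append]

/-- With `decT T = (T', S)`, the number `a` counts the open nodes of `T` strictly above the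
node at which `S` was glued; these are also open in `T'`, as is the gluing node itself. -/
lemma decT_spec (T : BTree) : ValidSub T → T.label ≠ 0 →
    (decT T).1.label + 1 = T.label ∧ ValidSub (decT T).1 ∧
    (∃ zs, (decT T).2 = node 1 zs ∧ zs ≠ [] ∧ ∀ z ∈ zs, z.label = 0 ∧ ValidSub z) ∧
    ((decT T).1.children = [] → childSum T = 0) ∧
    ((decT T).1.children ≠ [] → (decT T).1.childSum + 1 = childSum T) ∧
    size (decT T).1 + size (decT T).2 = size T + 1 ∧
    ∃ a, oc T = a + oc (decT T).2 ∧ a + 1 ≤ oc (decT T).1 := by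
  induction T using right_induction with
  | leaf n =>
    intro h h'
    exact absurd (h.inv.1 rfl) h'
  | step n l t ih =>
    intro h hn
    obtain ⟨-, hle, hv⟩ := h.inv
    simp only [label_node] at hn
    by_cases ht : t.label = 0
    · have hzne := zeroSuffix_ne (l := l) ht
      obtain ⟨ps, h1, h2, h3⟩ := zeroSuffix_spec (l ++ [t])
      generalize hts : l ++ [t] = ts at *
      generalize hzs : zeroSuffix ts = zs at *
      have hlab : (ts.getLastD eps).label = 0 := by simpa [← hts] using ht
      have htake : ts.take (ts.length - zs.length) = ps := by
        rw [h1]; simp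
      have hsum : (ts.map label).sum = (ps.map label).sum := by
        rw [h1, List.map_append, List.sum_append, sum_label_eq_zero h2, add_zero]
      have hsz : sizeL ts = sizeL ps + sizeL zs := by rw [h1, sizeL_append]
      have hzpos : 0 < sizeL zs := by
        obtain ⟨z, zs', rfl⟩ := List.exists_cons_of_ne_nil hzne
        have := size_pos z
        simp [sizeL]; omega
      have hD : decT (node n ts) = (node (n - 1)
          (if ps.isEmpty then [] else ps.dropLast ++ [decRoot (ps.getLastD eps)]),
          node 1 zs) := by
        rw [decT, if_pos hlab]; simp only [hzs, htake]
      have hvz : ∀ z ∈ zs, z.label = 0 ∧ ValidSub z :=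
        fun z hz => ⟨h2 z hz, hv z (by rw [h1]; simp [hz])⟩
      have hoc : oc (node n ts) = oc (node 1 zs) := by rw [h1]; exact oc_append_right _ _ _ _ hzne
      rw [hD]
      rcases h3 with rfl | ⟨q, y, rfl, hy⟩
      · simp at hsum
        refine ⟨by simp; omega, ?_, ⟨zs, rfl, hzne, hvz⟩, by simp [hsum], by simp,
          ?_, 0, ?_, ?_⟩
        · exact ValidSub.mk _ _ (by simp; omega) (by simp; omega) (by simp)
        · simp [size, sizeL] at hsz ⊢; omega
        · simp [hoc]
        · simp
      · obtain ⟨m, ys⟩ := y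
        have hvy : ValidSub (node m ys) := hv _ (by rw [h1]; simp)
        obtain ⟨hy1, hy2, hy3⟩ := hvy.inv
        simp only [label_node] at hy
        have hysne : ys ≠ [] := fun h => hy (hy1 h)
        simp at hsum
        have hps : (if (q ++ [node m ys]).isEmpty then [] else (q ++ [node m ys]).dropLast ++
            [decRoot ((q ++ [node m ys]).getLastD eps)]) = q ++ [node (m - 1) ys] := by
          simp [decRoot]
        rw [hps]
        refine ⟨by simp; omega, ?_, ⟨zs, rfl, hzne, hvz⟩, by simp, by simp [hsum]; omega,
          ?_, 0, ?_, ?_⟩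
        · refine ValidSub.mk _ _ (by simp) (by simp; omega) ?_
          intro u hu
          rcases List.mem_append.1 hu with hu | hu
          · exact hv u (by rw [h1]; simp [hu])
          · obtain rfl := List.mem_singleton.1 hu
            exact ValidSub.mk _ _ (fun h => absurd h hysne) (by omega) hy3
        · simp [sizeL_append, sizeL, size] at hsz ⊢; omega
        · simp [hoc]
        · -- the decremented child is moderate, so the gluing node is open
          have hmod : moderate (node (m - 1) ys) = true := by simp [moderate]; omega
          rw [oc_append]; simp [hysne, hmod]
    · obtain ⟨h1, h2, ⟨zs, h3⟩, h4, h5, h6, a, h8, h9⟩ := ih (hv t (by simp)) ht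
      have hD : decT (node n (l ++ [t])) =
          (node (n - 1) (l ++ [(decT t).1]), (decT t).2) := by
        rw [decT, if_neg (by simpa using ht)]; simp only [decL_append]
      rw [hD]
      simp at hle
      refine ⟨by simp; omega, ?_, ⟨zs, h3⟩, by simp, by simp; omega, ?_, ?_⟩
      · refine ValidSub.mk _ _ (by simp) (by simp; omega) ?_
        intro u hu
        rcases List.mem_append.1 hu with hu | hu
        · exact hv u (by simp [hu])
        · obtain rfl := List.mem_singleton.1 hu
          exact h2
      · simp [size, sizeL_append, sizeL]; omega
      · have htne : t.children ≠ [] := by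
          obtain ⟨m, ys⟩ := t
          exact fun h => ht ((hv _ (by simp)).inv.1 h)
        -- openness of the root is the same before and after, including when the gluing node
        -- becomes a leaf: it was excessive before
        have hiff : (!t.children.isEmpty && moderate t) =
            (!(decT t).1.children.isEmpty && moderate (decT t).1) := by
          rcases eq_or_ne (decT t).1.children [] with hc | hc
          · have := h4 hc
            simp [hc, moderate, this]; omega
          · have := h5 hc
            have hm : moderate t = moderate (decT t).1 := by
              simp only [moderate, decide_eq_decide]; omega
            rw [hm, List.isEmpty_eq_false_iff.2 hc, List.isEmpty_eq_false_iff.2 htne]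
        refine ⟨a + if (!t.children.isEmpty && moderate t) = true then 1 else 0, ?_, ?_⟩
        · rw [oc_append]; dsimp only; omega
        · rw [oc_append, ← hiff]; omega

/-! ### The map g -/

lemma oplusList_lam (Ts : List BTree) (T : BTree) :
    oplusList ((Ts ++ [T]).map (lam 0)) = node 1 ((Ts ++ [T]).map (setLabel 0)) := by
  induction Ts with
  | nil => simp [oplusList, lam]
  | cons a Ts ih =>
    have : oplusList ((a :: Ts ++ [T]).map (lam 0)) =
        oplus (lam 0 a) (oplusList ((Ts ++ [T]).map (lam 0))) := by
      cases Ts <;> simp [oplusList]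
    rw [this, ih]
    simp [oplus, lam]

lemma sigma_append (Ts : List BTree) (T : BTree) :
    sigma (Ts ++ [T]) = muT (node 1 (Ts.reverse.map (setLabel 0) ++ [eps])) 1 T := by
  simp only [sigma, mu, rho, oplusList_lam]
  simp [setLabel, eps]

lemma IsBeta.validSub {t : BTree} (h : IsBeta t) : ValidSub t := by
  obtain ⟨n, ts⟩ := t
  obtain ⟨h1, h2, h3⟩ := h
  refine ValidSub.mk _ _ h1 ?_ h3
  rcases eq_or_ne ts [] with rfl | h
  · simpa using (h1 rfl).le.trans zero_le_one
  · exact (h2 h).le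

lemma IsBeta.eq_eps {t : BTree} (h : IsBeta t) (ht : t.children = []) : t = eps := by
  obtain ⟨n, ts⟩ := t
  simp only [children_node] at ht
  subst ht
  have : n = 0 := h.1 rfl
  rw [this, eps]

lemma gF_eps (k : ℕ) : gF k eps = eps := by
  cases k <;> simp [gF, eps]

/-- The joint induction: both identities together with the shape of the image, for any
sufficient amount of fuel. -/
lemma gF_spec (k : ℕ) : ∀ T : BTree, IsBeta T → T.children ≠ [] → size T ≤ k →
    Good (gF k T) ∧ (gF k T).label = oc T ∧ oc (gF k T) = T.label := by
  induction k with
  | zero =>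
    intro T _ _ h
    have := size_pos T
    omega
  | succ k ih =>
    intro T hT hne hk
    obtain ⟨n, ts⟩ := T
    have hlab : n = (ts.map label).sum + 1 := hT.2.1 hne
    have hval := hT.2.2
    simp only [children_node] at hne hval
    match n, hlab with
    | 1, hlab =>
      obtain ⟨l, c, rfl⟩ : ∃ l c, ts = l ++ [c] := by
        rcases List.eq_nil_or_concat ts with h | ⟨l, c, h⟩
        · exact absurd h hne
        · exact ⟨l, c, by simpa using h⟩
      have hG : gF (k + 1) (node 1 (l ++ [c])) =
          sigma (l.map (fun c => gF k (makeRoot c)) ++ [gF k (makeRoot c)]) := by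
        simp [gF]
      rw [hG, sigma_append]
      have hs : (((l.map (fun c => gF k (makeRoot c))).reverse.map (setLabel 0)).map label).sum
          = 0 := sum_label_eq_zero (by simp [setLabel])
      have key := muT_spec (node 1 ((l.map (fun c => gF k (makeRoot c))).reverse.map (setLabel 0)
        ++ [eps])) _ rfl hs (gF k (makeRoot c))
      have hc := hval c (by simp)
      simp at hlab
      obtain ⟨m, cs⟩ := c
      have hm : m = 0 := by simpa using hlab.2
      rcases eq_or_ne cs [] with rfl | hcs
      · have hmk : makeRoot (node m []) = eps := by simp [makeRoot]
        rw [hmk, gF_eps] at key ⊢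
        obtain ⟨k1, k2, k3, k4, k5, -⟩ := key (by simp [eps])
        refine ⟨⟨k3, by rw [k1, k5 rfl]; rfl, k2⟩, ?_, k4⟩
        rw [k1, oc_append]; simp [eps]
      · have hmk : makeRoot (node m cs) = node ((cs.map label).sum + 1) cs := by
          cases cs with
          | nil => exact absurd rfl hcs
          | cons a b => simp [makeRoot]
        have hsz : size (makeRoot (node m cs)) ≤ k := by
          rw [hmk]
          simp [size, sizeL_append, sizeL] at hk ⊢; omega
        obtain ⟨i1, i2, i3⟩ := ih (makeRoot (node m cs))
          (by rw [hmk]; exact ⟨fun h => absurd h hcs, fun _ => rfl, hc.inv.2.2⟩)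
          (by rw [hmk]; exact hcs) hsz
        obtain ⟨k1, k2, k3, k4, -, k6⟩ := key i1.leaf
        refine ⟨⟨k3, by rw [k1, k6 i1.ne, i1.lab], k2⟩, ?_, k4⟩
        rw [k1, i2, hmk, oc_append, oc_relabel _ m]
        simp [moderate, hm, hcs]
    | n + 2, hlab =>
      have hG : gF (k + 1) (node (n + 2) ts) =
          nuT (gF k (decT (node (n + 2) ts)).1)
            (openStat (node (n + 2) ts) + 1 - openStat (decT (node (n + 2) ts)).2 - 1)
            (gF k (decT (node (n + 2) ts)).2) := by
        simp [gF, nu]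
      rw [hG]
      obtain ⟨d1, d2, ⟨zs, d3, d3', d3''⟩, d4, d5, d6, a, d8, d9⟩ :=
        decT_spec _ hT.validSub (by simp)
      rw [openStat_eq_oc (t := node (n + 2) ts) hne, openStat_eq_oc (by rw [d3]; exact d3'), d8]
      generalize hT' : (decT (node (n + 2) ts)).1 = T' at *
      generalize hS : (decT (node (n + 2) ts)).2 = S at *
      have hj : a + oc S + 1 - oc S - 1 = a := by omega
      rw [hj]
      simp only [label_node, childSum_node] at d1 d4 d5
      have hT'ne : T'.children ≠ [] := fun h => by have := d4 h; omega
      have d5 := d5 hT'ne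
      -- the gluing node is counted in both parts, and neither part is a single node
      have hSlt : size S ≤ k := by
        have := one_lt_size hT'ne
        omega
      have hTlt : size T' ≤ k := by
        have := one_lt_size (t := S) (by rw [d3]; exact d3')
        omega
      obtain ⟨i1, i2, i3⟩ := ih T' ⟨fun h => absurd h hT'ne, fun _ => by omega, by
        obtain ⟨m, us⟩ := T'
        exact d2.inv.2.2⟩ hT'ne hTlt
      obtain ⟨j1, j2, j3⟩ := ih S (by
        rw [d3]
        exact ⟨fun h => absurd h d3', fun _ => by
          simp [sum_label_eq_zero fun z hz => (d3'' z hz).1], fun z hz => (d3'' z hz).2⟩)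
        (by rw [d3]; exact d3') hSlt
      obtain ⟨k1, k2, k3, -, k5⟩ := nuT_spec (gF k T') a i1
        (by have := i1.lab; omega) (gF k S) j1.leaf
      obtain ⟨k5, k6⟩ := k5 j1.ne
      refine ⟨⟨k3, by rw [k1, k5, j1.lab]; omega, k2⟩, by omega, ?_⟩
      rw [k6, i3, j3, d3]
      simp; omega

/-- For every β(0,1)-tree T, root(g(T)) = open(T) and open(g(T)) = root(T). -/
theorem root_open_g (T : BTree) (hT : IsBeta T) :
    rootStat (g T) = openStat T ∧ openStat (g T) = rootStat T := by
  rcases eq_or_ne T.children [] with h | h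
  · rw [hT.eq_eps h, g, gF_eps]
    simp [rootStat, openStat, eps]
  · obtain ⟨h1, h2, h3⟩ := gF_spec _ T hT h le_rfl
    rw [openStat_eq_oc h, g, openStat_eq_oc h1.ne]
    exact ⟨h2, h3⟩

end BTree
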